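/- Let s : ℝ → ℝ be bounded measurable with ∫ s dμ = 0, and for |ε| < 1/‖s‖_∞ let μ_ε be the probability measure with density 1 + ε·s with respect to μ. Fix α ∈ (0,1) and let Q_ε be the α-quantile of μ_ε, i.e. the unique solution of μ_ε((−∞, Q_ε]) = α. Then: (i) ε ↦ Q_ε is differentiable at ε = 0 with p(Q₀)·(dQ_ε/dε)|_{ε=0} = − ∫ 1{y ≤ Q₀}·s(y) dμ(y); and (ii) ε ↦ ∫ y·1{y ≤ Q_ε} dμ_ε(y) is differentiable at ε = 0 with derivative ∫ [ (α − 1{y ≤ Q₀})·Q₀ + y·1{y ≤ Q₀} ] · s(y) dμ(y). (The pathwise-derivative computation of Lemma C.3: the efficient influence function of a quantile-truncated mean.) -/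

import Mathlib

open MeasureTheory

lemma aux_prim (μ : Measure ℝ) (p : ℝ → ℝ)
    (hp_cont : Continuous p) (hp_pos : ∀ x, 0 < p x)
    (hμ : μ = MeasureTheory.volume.withDensity fun x => ENNReal.ofReal (p x))
    (f : ℝ → ℝ) (hf : Integrable f μ) :
    Integrable (fun x => p x * f x) ∧ ∀ a t, (∫ y in Set.Iic t, f y ∂μ) =
      (∫ y in Set.Iic a, f y ∂μ) + ∫ y in a..t, p y * f y := by
  have hm : Measurable fun x => ENNReal.ofReal (p x) := by fun_prop
  have hlt : ∀ᵐ x ∂(volume : Measure ℝ), ENNReal.ofReal (p x) < ⊤ :=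
    Filter.Eventually.of_forall fun x => ENNReal.ofReal_lt_top
  have hi : Integrable (fun x => p x * f x) := by
    rw [hμ, integrable_withDensity_iff_integrable_smul' hm hlt] at hf
    refine hf.congr (Filter.Eventually.of_forall fun x => ?_)
    simp [ENNReal.toReal_ofReal (hp_pos x).le]
  have hset : ∀ t, (∫ y in Set.Iic t, f y ∂μ) = ∫ y in Set.Iic t, p y * f y := by
    intro t
    rw [hμ, setIntegral_withDensity_eq_setIntegral_toReal_smul hm
      (Filter.Eventually.of_forall fun x => ENNReal.ofReal_lt_top) _ measurableSet_Iic]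
    refine integral_congr_ae (Filter.Eventually.of_forall fun x => ?_)
    simp [ENNReal.toReal_ofReal (hp_pos x).le]
  refine ⟨hi, fun a t => ?_⟩
  rw [hset, hset, ← intervalIntegral.integral_Iic_sub_Iic hi.integrableOn hi.integrableOn]
  ring

lemma aux_cont (μ : Measure ℝ) (p : ℝ → ℝ)
    (hp_cont : Continuous p) (hp_pos : ∀ x, 0 < p x)
    (hμ : μ = MeasureTheory.volume.withDensity fun x => ENNReal.ofReal (p x))
    (f : ℝ → ℝ) (hf : Integrable f μ) :
    Continuous fun t => ∫ y in Set.Iic t, f y ∂μ := by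
  obtain ⟨hi, h⟩ := aux_prim μ p hp_cont hp_pos hμ f hf
  rw [show (fun t => ∫ y in Set.Iic t, f y ∂μ) = fun t => (∫ y in Set.Iic 0, f y ∂μ) +
    ∫ y in (0:ℝ)..t, p y * f y from funext fun t => h 0 t]
  exact continuous_const.add
    (intervalIntegral.continuous_primitive (fun a b => hi.intervalIntegrable) 0)

lemma aux_deriv (μ : Measure ℝ) (p : ℝ → ℝ)
    (hp_cont : Continuous p) (hp_pos : ∀ x, 0 < p x)
    (hμ : μ = MeasureTheory.volume.withDensity fun x => ENNReal.ofReal (p x))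
    (f : ℝ → ℝ) (hf : Integrable f μ) (hc : Continuous f) (t : ℝ) :
    HasDerivAt (fun t => ∫ y in Set.Iic t, f y ∂μ) (p t * f t) t := by
  obtain ⟨hi, h⟩ := aux_prim μ p hp_cont hp_pos hμ f hf
  rw [show (fun t => ∫ y in Set.Iic t, f y ∂μ) = fun t => (∫ y in Set.Iic 0, f y ∂μ) +
    ∫ y in (0:ℝ)..t, p y * f y from funext fun t => h 0 t]
  exact ((hp_cont.mul hc).integral_hasStrictDerivAt 0 t).hasDerivAt.const_add _

lemma aux_slope (f h : ℝ → ℝ) (hh : ContinuousAt h 0)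
    (e : ∀ᶠ ε in nhds (0:ℝ), f ε = f 0 + ε * h ε) : HasDerivAt f (h 0) 0 := by
  rw [hasDerivAt_iff_tendsto_slope]
  refine (hh.tendsto.mono_left nhdsWithin_le_nhds).congr' ?_
  filter_upwards [nhdsWithin_le_nhds e, self_mem_nhdsWithin] with ε h1 h2
  have : ε ≠ 0 := h2
  rw [slope_def_field, h1]
  field_simp
  ring



/-- The pathwise-derivative computation of Lemma C.3 (efficient influence function of a
quantile-truncated mean).  With `μ_ε` the tilt of `μ` by `1 + ε s` and `Q ε` its
`α`-quantile: (i) `ε ↦ Q ε` is differentiable at `0` with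
`p(Q 0) Q'(0) = -∫ 1{y ≤ Q 0} s(y) dμ`, and (ii) `ε ↦ ∫ y 1{y ≤ Q ε} dμ_ε` is
differentiable at `0` with derivative `∫ ((α - 1{y ≤ Q 0}) Q 0 + y 1{y ≤ Q 0}) s(y) dμ`. -/
theorem stmt_18 (μ : Measure ℝ) [IsProbabilityMeasure μ] (p : ℝ → ℝ)
    (hp_cont : Continuous p) (hp_pos : ∀ x, 0 < p x)
    (hμ : μ = MeasureTheory.volume.withDensity fun x => ENNReal.ofReal (p x))
    (hmom : Integrable (fun y => y ^ 2) μ)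
    (s : ℝ → ℝ) (hs : Measurable s) (C : ℝ) (hsC : ∀ y, |s y| ≤ C)
    (hs0 : (∫ y, s y ∂μ) = 0)
    (α : ℝ) (hα : α ∈ Set.Ioo (0 : ℝ) 1)
    (Q : ℝ → ℝ)
    (hQ : ∀ ε : ℝ, |ε| * C < 1 → (∫ y in Set.Iic (Q ε), (1 + ε * s y) ∂μ) = α) :
    (∃ D : ℝ, HasDerivAt Q D 0 ∧ p (Q 0) * D = -(∫ y in Set.Iic (Q 0), s y ∂μ)) ∧
    HasDerivAt (fun ε : ℝ => ∫ y in Set.Iic (Q ε), y * (1 + ε * s y) ∂μ)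
      (∫ y, ((α - (if y ≤ Q 0 then (1 : ℝ) else 0)) * Q 0 +
          y * (if y ≤ Q 0 then (1 : ℝ) else 0)) * s y ∂μ)
      0 := by

  have hC0 : 0 ≤ C := (abs_nonneg _).trans (hsC 0)
  have hy : Integrable (fun y : ℝ => y) μ := by
    have : MemLp (fun y : ℝ => y) 2 μ :=
      (memLp_two_iff_integrable_sq measurable_id.aestronglyMeasurable).2 hmom
    exact this.integrable (by norm_num)
  have hsi : Integrable s μ :=
    Integrable.of_bound hs.aestronglyMeasurable C (Filter.Eventually.of_forall hsC)
  have hys : Integrable (fun y => y * s y) μ :=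
    hy.mul_bdd (c := C) hs.aestronglyMeasurable (Filter.Eventually.of_forall hsC)
  have h1 : Integrable (fun _ : ℝ => (1:ℝ)) μ := integrable_const _
  set F : ℝ → ℝ := fun t => ∫ y in Set.Iic t, (1:ℝ) ∂μ with hF
  set S : ℝ → ℝ := fun t => ∫ y in Set.Iic t, s y ∂μ with hS
  set G : ℝ → ℝ := fun t => ∫ y in Set.Iic t, y ∂μ with hG
  set T : ℝ → ℝ := fun t => ∫ y in Set.Iic t, y * s y ∂μ with hT
  have cS : Continuous S := aux_cont μ p hp_cont hp_pos hμ s hsi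
  have cT : Continuous T := aux_cont μ p hp_cont hp_pos hμ _ hys
  have dF : ∀ t, HasDerivAt F (p t) t := fun t => by
    have := aux_deriv μ p hp_cont hp_pos hμ _ h1 continuous_const t
    rwa [mul_one] at this
  have dG : ∀ t, HasDerivAt G (p t * t) t := fun t =>
    aux_deriv μ p hp_cont hp_pos hμ _ hy continuous_id t
  have mF : StrictMono F := strictMono_of_hasDerivAt_pos dF hp_pos
  have hSb : ∀ t, |S t| ≤ C := fun t => by
    have := norm_setIntegral_le_of_norm_le_const (μ := μ) (s := Set.Iic t) (f := s) (C := C)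
      (measure_lt_top _ _) (fun x _ => hsC x)
    refine this.trans ?_
    exact mul_le_of_le_one_right hC0 measureReal_le_one
  have hQ' : ∀ ε : ℝ, |ε| * C < 1 → F (Q ε) + ε * S (Q ε) = α := fun ε hε => by
    rw [← hQ ε hε, integral_add h1.integrableOn (hsi.const_mul ε).integrableOn,
      integral_const_mul]
  have hF0 : F (Q 0) = α := by simpa using hQ' 0 (by simp)
  have hev : ∀ᶠ ε in nhds (0:ℝ), |ε| * C < 1 := by
    have : ContinuousAt (fun ε : ℝ => |ε| * C) 0 := by fun_prop
    exact this.eventually (gt_mem_nhds (by simp))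
  have hFQ : Filter.Tendsto (fun ε => F (Q ε)) (nhds 0) (nhds (F (Q 0))) := by
    have hz : Filter.Tendsto (fun ε => ε * S (Q ε)) (nhds 0) (nhds 0) := by
      refine squeeze_zero_norm (a := fun ε : ℝ => |ε| * C) (fun ε => ?_) ?_
      · rw [norm_mul]
        exact mul_le_mul_of_nonneg_left (hSb _) (abs_nonneg _)
      · have : ContinuousAt (fun ε : ℝ => |ε| * C) 0 := by fun_prop
        simpa [ContinuousAt] using this
    have := (tendsto_const_nhds (x := α)).sub hz
    rw [sub_zero] at this
    rw [hF0]
    refine this.congr' ?_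
    filter_upwards [hev] with ε hε
    linarith [hQ' ε hε]
  have cQ : ContinuousAt Q 0 := by
    refine tendsto_order.2 ⟨fun a ha => ?_, fun a ha => ?_⟩
    · filter_upwards [hFQ.eventually (lt_mem_nhds (mF ha))] with ε hε
      exact mF.lt_iff_lt.1 hε
    · filter_upwards [hFQ.eventually (gt_mem_nhds (mF ha))] with ε hε
      exact mF.lt_iff_lt.1 hε
  set g : ℝ → ℝ := dslope F (Q 0) with hg
  have cg : ContinuousAt g (Q 0) := continuousAt_dslope_same.2 (dF _).differentiableAt
  have hg0 : g (Q 0) = p (Q 0) := by rw [hg, dslope_same, (dF _).deriv]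
  have cgQ : ContinuousAt (fun ε => g (Q ε)) 0 := ContinuousAt.comp (f := Q) (g := g) cg cQ
  have hne0 : g (Q 0) ≠ 0 := by rw [hg0]; exact (hp_pos _).ne'
  have cSQ : ContinuousAt (fun ε => S (Q ε)) 0 :=
    ContinuousAt.comp (f := Q) (g := S) cS.continuousAt cQ
  have cTQ : ContinuousAt (fun ε => T (Q ε)) 0 :=
    ContinuousAt.comp (f := Q) (g := T) cT.continuousAt cQ
  have dQ : HasDerivAt Q (-S (Q 0) / g (Q 0)) 0 := by
    refine aux_slope Q (fun ε => -S (Q ε) / g (Q ε)) (cSQ.neg.div cgQ hne0) ?_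
    filter_upwards [hev, cgQ.eventually_ne hne0] with ε hε hne
    have e1 : (Q ε - Q 0) * g (Q ε) = F (Q ε) - F (Q 0) := by
      simpa using sub_smul_dslope F (Q 0) (Q ε)
    have e2 := hQ' ε hε
    field_simp
    linarith
  have hpD : p (Q 0) * (-S (Q 0) / g (Q 0)) = -S (Q 0) := by
    rw [← hg0]; field_simp
  refine ⟨⟨_, dQ, hpD⟩, ?_⟩
  have dGQ := (dG (Q 0)).comp 0 dQ
  have dT : HasDerivAt (fun ε => ε * T (Q ε)) (T (Q 0)) 0 :=
    aux_slope _ (fun ε => T (Q ε)) cTQ (Filter.Eventually.of_forall fun ε => by simp)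
  have key := dGQ.add dT
  have hfun : (fun ε : ℝ => ∫ y in Set.Iic (Q ε), y * (1 + ε * s y) ∂μ) =
      (G ∘ Q) + fun ε => ε * T (Q ε) := by
    funext ε
    simp only [Pi.add_apply, Function.comp, hG, hT]
    rw [← integral_const_mul, ← integral_add hy.integrableOn (hys.const_mul ε).integrableOn]
    congr 1
    funext y
    ring
  rw [hfun]
  refine key.congr_deriv ?_
  have hr : (∫ y, ((α - (if y ≤ Q 0 then (1 : ℝ) else 0)) * Q 0 +
          y * (if y ≤ Q 0 then (1 : ℝ) else 0)) * s y ∂μ) =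
      ∫ y, ((α * Q 0) * s y + (-(Q 0) * (Set.Iic (Q 0)).indicator s y
        + (Set.Iic (Q 0)).indicator (fun y => y * s y) y)) ∂μ := by
    congr 1
    funext y
    by_cases h : y ≤ Q 0
    · simp [h]; ring
    · simp [h]
  have i1 := hsi.indicator (measurableSet_Iic (a := Q 0))
  have i2 := hys.indicator (measurableSet_Iic (a := Q 0))
  have i3 : Integrable (fun y => -(Q 0) * (Set.Iic (Q 0)).indicator s y
        + (Set.Iic (Q 0)).indicator (fun y => y * s y) y) μ := (i1.const_mul _).add i2
  rw [hr, integral_add (hsi.const_mul _) i3,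
    integral_add (i1.const_mul _) i2, integral_const_mul, integral_const_mul, hs0,
    integral_indicator measurableSet_Iic, integral_indicator measurableSet_Iic]
  change p (Q 0) * Q 0 * (-S (Q 0) / g (Q 0)) + T (Q 0) = α * Q 0 * 0 + (-Q 0 * S (Q 0) + T (Q 0))
  linear_combination Q 0 * hpD
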